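/- arXiv:2109.12815 — 2 statements merged into one kernel-verified Lean document; each statement's English description precedes it below -/
import Mathlib

section
/- Let s ∈ (0,1), δ ∈ (0, 1/s − 1), C₀, M₀ ≥ 1, and suppose a ∈ C^∞(−1,1) satisfies |∂_v^α a(v)| ≤ C₀ M₀^α (α!)^{1/s} for all v ∈ (−1,1) and α ≥ 0. Suppose h ∈ C^∞(−1,1) solves (m² − ∂_v²)h + a·h = 0 on (−1,1) with ‖h‖_{L²(−1,1)} = 1. Then there exists M₁ (depending only on C₀, M₀, s, δ) such that ‖∂_v^j h‖_{L²(−r_j, r_j)} ≤ M₁^j (j!)^{1/s} for all j ≥ 0, where r_j = 1/2 + 1/(2(9+j)^δ). -/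
open Real Set Filter Topology MeasureTheory

/-! Differentiating the equation `j` times, `u = ∂ʲh` solves `u'' = m²u + ∂ʲ(ah)`. Since `m²` has
the good sign, testing against `(R² - v²)² u` gives a Caccioppoli inequality whose constant does
not depend on `m`: the norm of `∂ʲ⁺¹h` on a smaller interval `(-ρ, ρ)` is controlled by
`(R - ρ)⁻¹` times the norms of `∂ʲh` and `∂ʲ(ah)` on `(-R, R)`. As a binomial coefficient is at
most its power of exponent `σ = 1/s ≥ 1`, the Leibniz expansion of `∂ʲ(ah)` is
bounded by `M₁ʲ (j!)^σ` times a geometric series as soon as `2 M₀ ≤ M₁`. The loss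
`(r_j - r_{j+1})⁻¹` is of order `(j + 1)^(1 + δ) ≤ (j + 1)^σ`, and `(j + 1)^σ` is the growth of
`(j!)^σ` from `j` to `j + 1`, so the induction closes with a fixed `M₁`. -/

section GevreyWeights

/-- The Gevrey growth sequence `M ^ k * (k!) ^ σ`; a smooth function is Gevrey-`σ` when its
derivatives of order `k` are bounded by a constant multiple of such a sequence. -/
noncomputable def gevreyWeight (σ M : ℝ) (k : ℕ) : ℝ := M ^ k * (k.factorial : ℝ) ^ σ

variable {σ M M₀ M₁ : ℝ}

lemma gevreyWeight_zero : gevreyWeight σ M 0 = 1 := by simp [gevreyWeight]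

lemma gevreyWeight_nonneg (hM : 0 ≤ M) (k : ℕ) : 0 ≤ gevreyWeight σ M k := by
  unfold gevreyWeight; positivity

lemma gevreyWeight_succ (σ M : ℝ) (k : ℕ) :
    gevreyWeight σ M (k + 1) = M * ((k : ℝ) + 1) ^ σ * gevreyWeight σ M k := by
  unfold gevreyWeight
  rw [Nat.factorial_succ, Nat.cast_mul, mul_rpow (by positivity) (by positivity)]
  push_cast
  ring

lemma choose_mul_rpow_factorial_le (hσ : 1 ≤ σ) {i j : ℕ} (hij : i ≤ j) :
    (j.choose i : ℝ) * ((i.factorial : ℝ) ^ σ * ((j - i).factorial : ℝ) ^ σ)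
      ≤ (j.factorial : ℝ) ^ σ := by
  have hchoose : (j.choose i : ℝ) ≤ (j.choose i : ℝ) ^ σ :=
    self_le_rpow_of_one_le (mod_cast Nat.choose_pos hij) hσ
  calc (j.choose i : ℝ) * ((i.factorial : ℝ) ^ σ * ((j - i).factorial : ℝ) ^ σ)
      ≤ (j.choose i : ℝ) ^ σ * ((i.factorial : ℝ) ^ σ * ((j - i).factorial : ℝ) ^ σ) := by gcongr
    _ = (j.factorial : ℝ) ^ σ := by
      rw [← mul_rpow (by positivity) (by positivity), ← mul_rpow (by positivity) (by positivity),
        ← mul_assoc]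
      exact_mod_cast congrArg (fun n : ℕ => (n : ℝ) ^ σ)
        (Nat.choose_mul_factorial_mul_factorial hij)

lemma choose_mul_gevreyWeight_mul_le (hσ : 1 ≤ σ) (hM₀ : 0 ≤ M₀) (hM : 2 * M₀ ≤ M₁)
    {i j : ℕ} (hij : i ≤ j) :
    (j.choose i : ℝ) * (gevreyWeight σ M₀ i * gevreyWeight σ M₁ (j - i))
      ≤ (1 / 2) ^ i * gevreyWeight σ M₁ j := by
  have hM₁ : 0 ≤ M₁ := by linarith
  have hpow : M₀ ^ i * M₁ ^ (j - i) ≤ (1 / 2) ^ i * M₁ ^ j := by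
    calc M₀ ^ i * M₁ ^ (j - i) ≤ (1 / 2 * M₁) ^ i * M₁ ^ (j - i) := by gcongr; linarith
      _ = (1 / 2) ^ i * M₁ ^ j := by rw [mul_pow, mul_assoc, pow_mul_pow_sub _ hij]
  unfold gevreyWeight
  calc (j.choose i : ℝ) *
        (M₀ ^ i * (i.factorial : ℝ) ^ σ * (M₁ ^ (j - i) * ((j - i).factorial : ℝ) ^ σ))
      = (M₀ ^ i * M₁ ^ (j - i)) *
        ((j.choose i : ℝ) * ((i.factorial : ℝ) ^ σ * ((j - i).factorial : ℝ) ^ σ)) := by ring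
    _ ≤ ((1 / 2) ^ i * M₁ ^ j) * (j.factorial : ℝ) ^ σ := by
      gcongr; exact choose_mul_rpow_factorial_le hσ hij
    _ = (1 / 2) ^ i * (M₁ ^ j * (j.factorial : ℝ) ^ σ) := mul_assoc _ _ _

lemma sum_choose_mul_gevreyWeight_mul_le (hσ : 1 ≤ σ) (hM₀ : 0 ≤ M₀) (hM : 2 * M₀ ≤ M₁) (j : ℕ) :
    ∑ i ∈ Finset.range (j + 1),
        (j.choose i : ℝ) * (gevreyWeight σ M₀ i * gevreyWeight σ M₁ (j - i))
      ≤ 2 * gevreyWeight σ M₁ j := by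
  have hw : 0 ≤ gevreyWeight σ M₁ j := gevreyWeight_nonneg (by linarith) j
  calc _ ≤ ∑ i ∈ Finset.range (j + 1), (1 / 2 : ℝ) ^ i * gevreyWeight σ M₁ j :=
        Finset.sum_le_sum fun i hi =>
          choose_mul_gevreyWeight_mul_le hσ hM₀ hM (Finset.mem_range_succ_iff.mp hi)
    _ = (∑ i ∈ Finset.range (j + 1), (1 / 2 : ℝ) ^ i) * gevreyWeight σ M₁ j :=
        (Finset.sum_mul ..).symm
    _ ≤ 2 * gevreyWeight σ M₁ j := by gcongr; exact sum_geometric_two_le _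

end GevreyWeights

section Radii

variable {δ σ : ℝ}

lemma one_add_mul_one_sub_le_rpow_neg {t : ℝ} (ht : 0 < t) (hδ : 0 ≤ δ) :
    1 + δ * (1 - t) ≤ t ^ (-δ) := by
  calc 1 + δ * (1 - t) ≤ log t * -δ + 1 := by nlinarith [log_le_sub_one_of_pos ht]
    _ ≤ exp (log t * -δ) := add_one_le_exp _
    _ = t ^ (-δ) := (rpow_def_of_pos ht _).symm

lemma mul_rpow_neg_le_rpow_neg_sub_rpow_neg {x y : ℝ} (hx : 0 < x) (hy : 0 < y) (hδ : 0 ≤ δ) :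
    δ * (y - x) * y ^ (-(1 + δ)) ≤ x ^ (-δ) - y ^ (-δ) := by
  have htangent := one_add_mul_one_sub_le_rpow_neg (div_pos hx hy) hδ
  have hx_eq : x ^ (-δ) = (x / y) ^ (-δ) * y ^ (-δ) := by
    rw [← mul_rpow (by positivity) hy.le, div_mul_cancel₀ _ hy.ne']
  have hy_eq : y ^ (-(1 + δ)) = y⁻¹ * y ^ (-δ) := by
    rw [neg_add, rpow_add hy, rpow_neg_one]
  calc δ * (y - x) * y ^ (-(1 + δ)) = (1 + δ * (1 - x / y)) * y ^ (-δ) - y ^ (-δ) := by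
        rw [hy_eq]; field_simp; ring
    _ ≤ (x / y) ^ (-δ) * y ^ (-δ) - y ^ (-δ) := by gcongr
    _ = x ^ (-δ) - y ^ (-δ) := by rw [hx_eq]

/-- The radii `r_j = 1/2 + 1/(2(9+j)^δ)` of the shrinking intervals `(-r_j, r_j)`. -/
noncomputable def gevreyRadius (δ : ℝ) (j : ℕ) : ℝ := 1 / 2 + 1 / (2 * ((9 : ℝ) + j) ^ δ)

lemma gevreyRadius_pos (δ : ℝ) (j : ℕ) : 0 < gevreyRadius δ j := by
  unfold gevreyRadius; positivity

lemma gevreyRadius_lt_one (hδ : 0 < δ) (j : ℕ) : gevreyRadius δ j < 1 := by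
  have hpow : 1 < ((9 : ℝ) + j) ^ δ :=
    one_lt_rpow (by linarith [(Nat.cast_nonneg j : (0 : ℝ) ≤ j)]) hδ
  have hfrac : 1 / (2 * ((9 : ℝ) + j) ^ δ) < 1 / 2 :=
    one_div_lt_one_div_of_lt two_pos (by linarith)
  unfold gevreyRadius
  linarith

lemma le_gevreyRadius_sub_succ (hδ : 0 ≤ δ) (j : ℕ) :
    δ / 2 * ((10 : ℝ) + j) ^ (-(1 + δ)) ≤ gevreyRadius δ j - gevreyRadius δ (j + 1) := by
  have hgap := mul_rpow_neg_le_rpow_neg_sub_rpow_neg (x := 9 + j) (y := 10 + j)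
    (by positivity) (by positivity) hδ
  have hdiff : gevreyRadius δ j - gevreyRadius δ (j + 1)
      = (((9 : ℝ) + j) ^ (-δ) - ((10 : ℝ) + j) ^ (-δ)) / 2 := by
    unfold gevreyRadius
    rw [rpow_neg (by positivity), rpow_neg (by positivity)]
    push_cast
    ring_nf
  rw [hdiff]
  linarith

lemma le_gevreyRadius_sub_succ_mul_rpow (hδ : 0 ≤ δ) (hσ : 1 + δ ≤ σ) (j : ℕ) :
    δ / 2 * (10 : ℝ) ^ (-σ)
      ≤ (gevreyRadius δ j - gevreyRadius δ (j + 1)) * ((j : ℝ) + 1) ^ σ := by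
  have hj : (0 : ℝ) ≤ j := j.cast_nonneg
  have hpow : ((10 : ℝ) * (j + 1)) ^ (-σ) ≤ ((10 : ℝ) + j) ^ (-(1 + δ)) := by
    calc ((10 : ℝ) * (j + 1)) ^ (-σ) ≤ ((10 : ℝ) + j) ^ (-σ) :=
          rpow_le_rpow_of_nonpos (by positivity) (by linarith [hj]) (by linarith)
      _ ≤ ((10 : ℝ) + j) ^ (-(1 + δ)) :=
          rpow_le_rpow_of_exponent_le (by linarith [hj]) (by linarith)
  calc δ / 2 * (10 : ℝ) ^ (-σ)
      = δ / 2 * ((10 : ℝ) * (j + 1)) ^ (-σ) * ((j : ℝ) + 1) ^ σ := by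
        rw [mul_rpow (by positivity) (by positivity), mul_assoc, mul_assoc,
          ← rpow_add (by positivity), neg_add_cancel, rpow_zero, mul_one]
    _ ≤ (δ / 2 * ((10 : ℝ) + j) ^ (-(1 + δ))) * ((j : ℝ) + 1) ^ σ := by gcongr
    _ ≤ _ := by gcongr; exact le_gevreyRadius_sub_succ hδ j

end Radii

section L2Norm

variable {E F : Type*} [NormedAddCommGroup E] [NormedAddCommGroup F] {u : ℝ → E} {f : ℝ → F}
  {R ρ : ℝ}

/-- The norm of `L²(-R, R)`; the half-open interval matches the convention of interval
integrals. -/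
noncomputable def l2Norm (u : ℝ → E) (R : ℝ) : ℝ := lpNorm u 2 (volume.restrict (Ioc (-R) R))

lemma l2Norm_nonneg : 0 ≤ l2Norm u R := lpNorm_nonneg

lemma memLp_of_continuousOn_Icc (hu : ContinuousOn u (Icc (-R) R)) :
    MemLp u 2 (volume.restrict (Ioc (-R) R)) := by
  obtain ⟨C, hC⟩ := isCompact_Icc.exists_bound_of_continuousOn hu
  exact .of_bound ((hu.mono Ioc_subset_Icc_self).aestronglyMeasurable measurableSet_Ioc) C
    (ae_restrict_of_forall_mem measurableSet_Ioc fun v hv => hC v (Ioc_subset_Icc_self hv))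

lemma l2Norm_eq_sqrt (hR : 0 ≤ R)
    (hu : AEStronglyMeasurable u (volume.restrict (Ioc (-R) R))) :
    l2Norm u R = √(∫ v in (-R)..R, ‖u v‖ ^ 2) := by
  rw [l2Norm, lpNorm_eq_integral_norm_rpow_toReal two_ne_zero ENNReal.ofNat_ne_top hu,
    intervalIntegral.integral_of_le (by linarith), sqrt_eq_rpow]
  simp

lemma l2Norm_sq (hR : 0 ≤ R) (hu : ContinuousOn u (Icc (-R) R)) :
    l2Norm u R ^ 2 = ∫ v in (-R)..R, ‖u v‖ ^ 2 := by
  rw [l2Norm_eq_sqrt hR (memLp_of_continuousOn_Icc hu).1]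
  exact sq_sqrt (intervalIntegral.integral_nonneg (by linarith) fun v _ => sq_nonneg _)

lemma l2Norm_mono_radius (hρR : ρ ≤ R) (hu : MemLp u 2 (volume.restrict (Ioc (-R) R))) :
    l2Norm u ρ ≤ l2Norm u R := by
  have hle : volume.restrict (Ioc (-ρ) ρ) ≤ volume.restrict (Ioc (-R) R) :=
    Measure.restrict_mono (Ioc_subset_Ioc (by linarith) hρR) le_rfl
  rw [l2Norm, l2Norm, ← toReal_eLpNorm (hu.1.mono_measure hle), ← toReal_eLpNorm hu.1]
  exact ENNReal.toReal_mono hu.2.ne (eLpNorm_mono_measure u hle)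

lemma integral_norm_mul_norm_le_l2Norm_mul (hR : 0 ≤ R) (hu : ContinuousOn u (Icc (-R) R))
    (hf : ContinuousOn f (Icc (-R) R)) :
    ∫ v in (-R)..R, ‖u v‖ * ‖f v‖ ≤ l2Norm u R * l2Norm f R := by
  have hu₂ := memLp_of_continuousOn_Icc hu
  have hf₂ := memLp_of_continuousOn_Icc hf
  have holder := integral_mul_norm_le_Lp_mul_Lq (f := fun v => ‖u v‖) (g := fun v => ‖f v‖)
    (μ := volume.restrict (Ioc (-R) R)) HolderConjugate.two_two
    (by simpa using hu₂.norm) (by simpa using hf₂.norm)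
  rw [l2Norm_eq_sqrt hR hu₂.1, l2Norm_eq_sqrt hR hf₂.1, sqrt_eq_rpow, sqrt_eq_rpow]
  simpa [intervalIntegral.integral_of_le (show -R ≤ R by linarith)] using holder

lemma l2Norm_le_sum_mul_l2Norm {ι : Type*} {s : Finset ι} {b : ι → ℝ} {g : ι → ℝ → F}
    (hb : ∀ i ∈ s, 0 ≤ b i) (hg : ∀ i ∈ s, ContinuousOn (g i) (Icc (-R) R))
    (hu : ContinuousOn u (Icc (-R) R))
    (hle : ∀ v ∈ Icc (-R) R, ‖u v‖ ≤ ∑ i ∈ s, b i * ‖g i v‖) :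
    l2Norm u R ≤ ∑ i ∈ s, b i * l2Norm (g i) R := by
  set μ := volume.restrict (Ioc (-R) R)
  have hterm : ∀ i ∈ s, MemLp (b i • fun v => ‖g i v‖) 2 μ := fun i hi =>
    (memLp_of_continuousOn_Icc (hg i hi)).norm.const_smul (b i)
  have hsum : MemLp (∑ i ∈ s, b i • fun v => ‖g i v‖) 2 μ := memLp_finsetSum' s hterm
  have hae : ∀ᵐ v ∂μ, ‖u v‖ ≤ (∑ i ∈ s, b i • fun v => ‖g i v‖) v :=
    ae_restrict_of_forall_mem measurableSet_Ioc fun v hv => by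
      simpa using hle v (Ioc_subset_Icc_self hv)
  calc l2Norm u R ≤ lpNorm (∑ i ∈ s, b i • fun v => ‖g i v‖) 2 μ := by
        rw [l2Norm, ← toReal_eLpNorm (memLp_of_continuousOn_Icc hu).1, ← toReal_eLpNorm hsum.1]
        exact ENNReal.toReal_mono hsum.2.ne (eLpNorm_mono_ae_real hae)
    _ ≤ ∑ i ∈ s, lpNorm (b i • fun v => ‖g i v‖) 2 μ := lpNorm_sum_le hterm one_le_two
    _ = ∑ i ∈ s, b i * l2Norm (g i) R := by
      refine Finset.sum_congr rfl fun i hi => ?_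
      rw [lpNorm_const_smul, lpNorm_norm (memLp_of_continuousOn_Icc (hg i hi)).1, coe_nnnorm,
        norm_of_nonneg (hb i hi), l2Norm]

lemma mul_l2Norm_sq_le_integral_cutoff (hρ : 0 ≤ ρ) (hρR : ρ ≤ R)
    (hu : ContinuousOn u (Icc (-R) R)) :
    R ^ 2 * (R - ρ) ^ 2 * l2Norm u ρ ^ 2
      ≤ ∫ v in (-R)..R, (R ^ 2 - v ^ 2) ^ 2 * ‖u v‖ ^ 2 := by
  have hsub : Icc (-ρ) ρ ⊆ Icc (-R) R := Icc_subset_Icc (by linarith) hρR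
  have hρρ : uIcc (-ρ) ρ = Icc (-ρ) ρ := uIcc_of_le (by linarith)
  have hRR : uIcc (-R) R = Icc (-R) R := uIcc_of_le (by linarith)
  have cu : ContinuousOn u (Icc (-ρ) ρ) := hu.mono hsub
  have hcutoff {v : ℝ} (hv : v ∈ Icc (-ρ) ρ) : R * (R - ρ) ≤ R ^ 2 - v ^ 2 := by
    have hvρ : v ^ 2 ≤ ρ ^ 2 := sq_le_sq' hv.1 hv.2
    nlinarith
  rw [l2Norm_sq hρ cu, ← mul_pow, ← intervalIntegral.integral_const_mul]
  calc _ ≤ ∫ v in (-ρ)..ρ, (R ^ 2 - v ^ 2) ^ 2 * ‖u v‖ ^ 2 := by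
        refine intervalIntegral.integral_mono_on (by linarith) ?_ ?_ fun v hv => ?_
        · exact (hρρ ▸ (by fun_prop : ContinuousOn _ (Icc (-ρ) ρ))).intervalIntegrable
        · exact (hρρ ▸ (by fun_prop : ContinuousOn _ (Icc (-ρ) ρ))).intervalIntegrable
        · have hR_mul : 0 ≤ R * (R - ρ) := mul_nonneg (hρ.trans hρR) (sub_nonneg.2 hρR)
          gcongr
          exact hcutoff hv
    _ ≤ _ := intervalIntegral.integral_mono_interval (by linarith) (by linarith) hρR
      (.of_forall fun v => by positivity)
      (hRR ▸ (by fun_prop : ContinuousOn _ (Icc (-R) R))).intervalIntegrable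

end L2Norm

section Caccioppoli

variable {E : Type*} [NormedAddCommGroup E] [InnerProductSpace ℝ E] {u u' u'' f : ℝ → E}
  {R ρ c : ℝ}

lemma integral_cutoff_energy_eq_zero (hR : 0 ≤ R)
    (hu : ∀ v ∈ Icc (-R) R, HasDerivAt u (u' v) v)
    (hu' : ∀ v ∈ Icc (-R) R, HasDerivAt u' (u'' v) v) (hu'' : ContinuousOn u'' (Icc (-R) R)) :
    ∫ v in (-R)..R, ((R ^ 2 - v ^ 2) ^ 2 * (‖u' v‖ ^ 2 + inner ℝ (u v) (u'' v))
      - 4 * v * (R ^ 2 - v ^ 2) * inner ℝ (u v) (u' v)) = 0 := by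
  have hIcc : uIcc (-R) R = Icc (-R) R := uIcc_of_le (by linarith)
  have cu : ContinuousOn u (Icc (-R) R) := HasDerivAt.continuousOn hu
  have cu' : ContinuousOn u' (Icc (-R) R) := HasDerivAt.continuousOn hu'
  have hcutoff (v : ℝ) :
      HasDerivAt (fun v => (R ^ 2 - v ^ 2) ^ 2) (-(4 * v * (R ^ 2 - v ^ 2))) v :=
    (((hasDerivAt_pow 2 v).const_sub (R ^ 2)).pow 2).congr_deriv (by simp; ring)
  rw [intervalIntegral.integral_eq_sub_of_hasDerivAt
    (f := fun v => (R ^ 2 - v ^ 2) ^ 2 * inner ℝ (u v) (u' v))]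
  · ring
  · rw [hIcc]
    intro v hv
    refine ((hcutoff v).mul ((hu v hv).inner ℝ (hu' v hv))).congr_deriv ?_
    rw [real_inner_self_eq_norm_sq]
    ring
  · exact (hIcc ▸ (by fun_prop : ContinuousOn _ (Icc (-R) R))).intervalIntegrable

-- Expanding `0 ≤ ‖η u' - 4 v u‖²` with the cutoff `η = R² - v²`.
lemma cutoff_mul_norm_deriv_sq_le (hc : 0 ≤ c) {v : ℝ} (hv : v ∈ Icc (-R) R) (x y z : E) :
    1 / 2 * ((R ^ 2 - v ^ 2) ^ 2 * ‖y‖ ^ 2)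
      ≤ ((R ^ 2 - v ^ 2) ^ 2 * (‖y‖ ^ 2 + inner ℝ x (c • x + z))
          - 4 * v * (R ^ 2 - v ^ 2) * inner ℝ x y)
        + (8 * R ^ 2 * ‖x‖ ^ 2 + R ^ 4 * (‖x‖ * ‖z‖)) := by
  have hvR : v ^ 2 ≤ R ^ 2 := sq_le_sq' hv.1 hv.2
  have hη : (R ^ 2 - v ^ 2) ^ 2 ≤ R ^ 4 := by nlinarith [sq_nonneg v]
  have hsquare : 0 ≤ (R ^ 2 - v ^ 2) ^ 2 * ‖y‖ ^ 2
      - 8 * v * (R ^ 2 - v ^ 2) * inner ℝ x y + 16 * v ^ 2 * ‖x‖ ^ 2 := by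
    calc 0 ≤ ‖(R ^ 2 - v ^ 2) • y - (4 * v) • x‖ ^ 2 := sq_nonneg _
      _ = _ := by
        rw [norm_sub_sq_real, norm_smul, norm_smul, real_inner_smul_left, real_inner_smul_right,
          real_inner_comm, mul_pow, mul_pow, norm_eq_abs, norm_eq_abs, sq_abs, sq_abs]
        ring
  have hforcing : -((R ^ 2 - v ^ 2) ^ 2 * inner ℝ x z) ≤ R ^ 4 * (‖x‖ * ‖z‖) := by
    calc -((R ^ 2 - v ^ 2) ^ 2 * inner ℝ x z) = (R ^ 2 - v ^ 2) ^ 2 * -inner ℝ x z := by ring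
      _ ≤ (R ^ 2 - v ^ 2) ^ 2 * (‖x‖ * ‖z‖) := by
        gcongr; exact (neg_le_abs _).trans (abs_real_inner_le_norm x z)
      _ ≤ R ^ 4 * (‖x‖ * ‖z‖) := by gcongr
  have hpotential : 0 ≤ (R ^ 2 - v ^ 2) ^ 2 * (c * ‖x‖ ^ 2) := by positivity
  have hgradient : v ^ 2 * ‖x‖ ^ 2 ≤ R ^ 2 * ‖x‖ ^ 2 := by gcongr
  rw [inner_add_right, real_inner_smul_right, real_inner_self_eq_norm_sq]
  linarith

lemma integral_cutoff_mul_norm_deriv_sq_le (hR : 0 ≤ R) (hc : 0 ≤ c)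
    (hu : ∀ v ∈ Icc (-R) R, HasDerivAt u (u' v) v)
    (hu' : ∀ v ∈ Icc (-R) R, HasDerivAt u' (c • u v + f v) v) (hf : ContinuousOn f (Icc (-R) R)) :
    1 / 2 * ∫ v in (-R)..R, (R ^ 2 - v ^ 2) ^ 2 * ‖u' v‖ ^ 2
      ≤ 8 * R ^ 2 * l2Norm u R ^ 2 + R ^ 4 * (l2Norm u R * l2Norm f R) := by
  have hIcc : uIcc (-R) R = Icc (-R) R := uIcc_of_le (by linarith)
  have cu : ContinuousOn u (Icc (-R) R) := HasDerivAt.continuousOn hu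
  have cu' : ContinuousOn u' (Icc (-R) R) := HasDerivAt.continuousOn hu'
  have hintegrable {g : ℝ → ℝ} (hg : ContinuousOn g (Icc (-R) R)) :
      IntervalIntegrable g volume (-R) R := (hIcc ▸ hg).intervalIntegrable
  rw [← intervalIntegral.integral_const_mul]
  calc _ ≤ ∫ v in (-R)..R, _ :=
        intervalIntegral.integral_mono_on (by linarith) (hintegrable (by fun_prop))
          (hintegrable (by fun_prop))
          fun v hv => cutoff_mul_norm_deriv_sq_le hc hv (u v) (u' v) (f v)
    _ = 8 * R ^ 2 * (∫ v in (-R)..R, ‖u v‖ ^ 2) + R ^ 4 * ∫ v in (-R)..R, ‖u v‖ * ‖f v‖ := by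
      rw [intervalIntegral.integral_add (hintegrable (by fun_prop)) (hintegrable (by fun_prop)),
        integral_cutoff_energy_eq_zero hR hu hu' (by fun_prop), zero_add,
        intervalIntegral.integral_add (hintegrable (by fun_prop)) (hintegrable (by fun_prop)),
        intervalIntegral.integral_const_mul, intervalIntegral.integral_const_mul]
    _ ≤ _ := by
      rw [← l2Norm_sq hR cu]
      gcongr
      exact integral_norm_mul_norm_le_l2Norm_mul hR cu hf

theorem sq_mul_l2Norm_deriv_sq_le (hρ : 0 ≤ ρ) (hρR : ρ < R) (hc : 0 ≤ c)
    (hu : ∀ v ∈ Icc (-R) R, HasDerivAt u (u' v) v)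
    (hu' : ∀ v ∈ Icc (-R) R, HasDerivAt u' (c • u v + f v) v) (hf : ContinuousOn f (Icc (-R) R)) :
    (R - ρ) ^ 2 * l2Norm u' ρ ^ 2
      ≤ 16 * l2Norm u R ^ 2 + 2 * R ^ 2 * (l2Norm u R * l2Norm f R) := by
  have hR : 0 < R := hρ.trans_lt hρR
  have hupper := integral_cutoff_mul_norm_deriv_sq_le hR.le hc hu hu' hf
  have hlower := mul_l2Norm_sq_le_integral_cutoff hρ hρR.le (HasDerivAt.continuousOn hu')
  refine le_of_mul_le_mul_left ?_ (pow_pos hR 2)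
  linarith

end Caccioppoli

section IteratedDeriv

variable {F : Type*} [NormedAddCommGroup F] [NormedSpace ℝ F] {f : ℝ → F} {Ω : Set ℝ}

lemma contDiffOn_iteratedDeriv (hΩ : IsOpen Ω) (hf : ContDiffOn ℝ (⊤ : ℕ∞) f Ω) (j : ℕ) :
    ContDiffOn ℝ (⊤ : ℕ∞) (iteratedDeriv j f) Ω := by
  induction j with
  | zero => simpa using hf
  | succ n ih =>
    rw [iteratedDeriv_succ]
    exact ((contDiffOn_infty_iff_deriv_of_isOpen hΩ).1 ih).2

lemma hasDerivAt_iteratedDeriv (hΩ : IsOpen Ω) (hf : ContDiffOn ℝ (⊤ : ℕ∞) f Ω) (j : ℕ) {v : ℝ}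
    (hv : v ∈ Ω) : HasDerivAt (iteratedDeriv j f) (iteratedDeriv (j + 1) f v) v := by
  rw [iteratedDeriv_succ]
  exact (((contDiffOn_iteratedDeriv hΩ hf j).contDiffAt (hΩ.mem_nhds hv)).differentiableAt
    (by simp)).hasDerivAt

end IteratedDeriv

section GevreyRegularity

variable {A E : Type*} [NormedRing A] [NormedAlgebra ℝ A] [NormedAddCommGroup E]
  [InnerProductSpace ℝ E] [Module A E] [IsBoundedSMul A E] [IsScalarTower ℝ A E]
  {a : ℝ → A} {h : ℝ → E} {Ω : Set ℝ} {c σ C₀ M₀ M₁ : ℝ}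

lemma norm_iteratedDeriv_smul_le {v : ℝ} {j : ℕ} (ha : ContDiffAt ℝ j a v)
    (hh : ContDiffAt ℝ j h v) :
    ‖iteratedDeriv j (a • h) v‖ ≤ ∑ i ∈ Finset.range (j + 1),
      j.choose i * (‖iteratedDeriv i a v‖ * ‖iteratedDeriv (j - i) h v‖) := by
  have leibniz := iteratedDerivWithin_smul (mem_univ v) uniqueDiffOn_univ
    ha.contDiffWithinAt hh.contDiffWithinAt
  simp only [iteratedDerivWithin_univ] at leibniz
  rw [leibniz]
  refine norm_sum_le_of_le _ fun i _ => norm_nsmul_le.trans ?_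
  gcongr
  exact norm_smul_le _ _

lemma iteratedDeriv_add_two_eq (hΩ : IsOpen Ω) (ha : ContDiffOn ℝ (⊤ : ℕ∞) a Ω)
    (hh : ContDiffOn ℝ (⊤ : ℕ∞) h Ω)
    (hode : ∀ v ∈ Ω, c • h v - deriv (deriv h) v + a v • h v = 0) (j : ℕ) {v : ℝ} (hv : v ∈ Ω) :
    iteratedDeriv (j + 2) h v = c • iteratedDeriv j h v + iteratedDeriv j (a • h) v := by
  have hhv : ContDiffAt ℝ j h v :=
    (hh.contDiffAt (hΩ.mem_nhds hv)).of_le (mod_cast le_top)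
  have hav : ContDiffAt ℝ j a v :=
    (ha.contDiffAt (hΩ.mem_nhds hv)).of_le (mod_cast le_top)
  have hch : ContDiffAt ℝ j (c • h) v := hhv.const_smul c
  have hah : ContDiffAt ℝ j (a • h) v := hav.smul hhv
  have hode' : deriv (deriv h) =ᶠ[𝓝 v] c • h + a • h := by
    filter_upwards [hΩ.mem_nhds hv] with x hx
    rw [Pi.add_apply, Pi.smul_apply, Pi.smul_apply', ← sub_eq_zero, ← neg_eq_zero, ← hode x hx]
    abel
  rw [iteratedDeriv_succ', iteratedDeriv_succ', hode'.iteratedDeriv_eq,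
    iteratedDeriv_add hch hah, iteratedDeriv_const_smul hhv]

section LocalEstimates

variable {R B : ℝ} {j : ℕ}

lemma l2Norm_iteratedDeriv_smul_le (hσ : 1 ≤ σ) (hC₀ : 0 ≤ C₀) (hM₀ : 0 ≤ M₀) (hM : 2 * M₀ ≤ M₁)
    (hB : 0 ≤ B) (hΩ : IsOpen Ω) (hR : Icc (-R) R ⊆ Ω) (ha : ContDiffOn ℝ (⊤ : ℕ∞) a Ω)
    (hh : ContDiffOn ℝ (⊤ : ℕ∞) h Ω)
    (ha_le : ∀ v ∈ Ω, ∀ i, ‖iteratedDeriv i a v‖ ≤ C₀ * gevreyWeight σ M₀ i)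
    (hh_le : ∀ k ≤ j, l2Norm (iteratedDeriv k h) R ≤ gevreyWeight σ M₁ k * B) :
    l2Norm (iteratedDeriv j (a • h)) R ≤ 2 * C₀ * (gevreyWeight σ M₁ j * B) := by
  have hw (i : ℕ) : 0 ≤ gevreyWeight σ M₀ i := gevreyWeight_nonneg hM₀ i
  have hleibniz : ∀ v ∈ Icc (-R) R, ‖iteratedDeriv j (a • h) v‖ ≤ ∑ i ∈ Finset.range (j + 1),
      (j.choose i * (C₀ * gevreyWeight σ M₀ i)) * ‖iteratedDeriv (j - i) h v‖ := by
    intro v hv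
    refine (norm_iteratedDeriv_smul_le
      ((ha.contDiffAt (hΩ.mem_nhds (hR hv))).of_le (mod_cast le_top))
      ((hh.contDiffAt (hΩ.mem_nhds (hR hv))).of_le (mod_cast le_top))).trans ?_
    refine Finset.sum_le_sum fun i _ => ?_
    rw [mul_assoc]
    gcongr
    exact ha_le v (hR hv) i
  calc l2Norm (iteratedDeriv j (a • h)) R
      ≤ ∑ i ∈ Finset.range (j + 1), (j.choose i * (C₀ * gevreyWeight σ M₀ i)) *
          l2Norm (iteratedDeriv (j - i) h) R :=
        l2Norm_le_sum_mul_l2Norm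
          (fun i _ => mul_nonneg (Nat.cast_nonneg _) (mul_nonneg hC₀ (hw i)))
          (fun i _ => (contDiffOn_iteratedDeriv hΩ hh _).continuousOn.mono hR)
          ((contDiffOn_iteratedDeriv hΩ (ha.smul hh) j).continuousOn.mono hR) hleibniz
    _ ≤ ∑ i ∈ Finset.range (j + 1), (j.choose i * (C₀ * gevreyWeight σ M₀ i)) *
          (gevreyWeight σ M₁ (j - i) * B) := by
        gcongr with i _
        · exact mul_nonneg (Nat.cast_nonneg _) (mul_nonneg hC₀ (hw i))
        · exact hh_le (j - i) (Nat.sub_le j i)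
    _ = C₀ * B * ∑ i ∈ Finset.range (j + 1),
          (j.choose i : ℝ) * (gevreyWeight σ M₀ i * gevreyWeight σ M₁ (j - i)) := by
        rw [Finset.mul_sum]
        exact Finset.sum_congr rfl fun i _ => by ring
    _ ≤ C₀ * B * (2 * gevreyWeight σ M₁ j) := by
        gcongr; exact sum_choose_mul_gevreyWeight_mul_le hσ hM₀ hM j
    _ = 2 * C₀ * (gevreyWeight σ M₁ j * B) := by ring

lemma mul_l2Norm_iteratedDeriv_succ_le {ρ : ℝ} (hσ : 1 ≤ σ) (hC₀ : 0 ≤ C₀) (hM₀ : 0 ≤ M₀)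
    (hM : 2 * M₀ ≤ M₁) (hc : 0 ≤ c) (hB : 0 ≤ B) (hρ : 0 ≤ ρ) (hρR : ρ < R) (hΩ : IsOpen Ω)
    (hR : Icc (-R) R ⊆ Ω) (ha : ContDiffOn ℝ (⊤ : ℕ∞) a Ω) (hh : ContDiffOn ℝ (⊤ : ℕ∞) h Ω)
    (hode : ∀ v ∈ Ω, c • h v - deriv (deriv h) v + a v • h v = 0)
    (ha_le : ∀ v ∈ Ω, ∀ i, ‖iteratedDeriv i a v‖ ≤ C₀ * gevreyWeight σ M₀ i)
    (hh_le : ∀ k ≤ j, l2Norm (iteratedDeriv k h) R ≤ gevreyWeight σ M₁ k * B) :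
    (R - ρ) * l2Norm (iteratedDeriv (j + 1) h) ρ
      ≤ (4 + C₀ * R ^ 2) * (gevreyWeight σ M₁ j * B) := by
  set W := gevreyWeight σ M₁ j * B
  have hW : 0 ≤ W := mul_nonneg (gevreyWeight_nonneg (by linarith) j) hB
  have hu : l2Norm (iteratedDeriv j h) R ≤ W := hh_le j le_rfl
  have hf : l2Norm (iteratedDeriv j (a • h)) R ≤ 2 * C₀ * W :=
    l2Norm_iteratedDeriv_smul_le hσ hC₀ hM₀ hM hB hΩ hR ha hh ha_le hh_le
  have caccioppoli := sq_mul_l2Norm_deriv_sq_le hρ hρR hc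
    (fun v hv => hasDerivAt_iteratedDeriv hΩ hh j (hR hv))
    (fun v hv => iteratedDeriv_add_two_eq hΩ ha hh hode j (hR hv) ▸
      hasDerivAt_iteratedDeriv hΩ hh (j + 1) (hR hv))
    ((contDiffOn_iteratedDeriv hΩ (ha.smul hh) j).continuousOn.mono hR)
  refine le_of_sq_le_sq ?_ (by positivity)
  calc ((R - ρ) * l2Norm (iteratedDeriv (j + 1) h) ρ) ^ 2
      = (R - ρ) ^ 2 * l2Norm (iteratedDeriv (j + 1) h) ρ ^ 2 := mul_pow _ _ _
    _ ≤ 16 * l2Norm (iteratedDeriv j h) R ^ 2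
        + 2 * R ^ 2 * (l2Norm (iteratedDeriv j h) R * l2Norm (iteratedDeriv j (a • h)) R) :=
      caccioppoli
    _ ≤ 16 * W ^ 2 + 2 * R ^ 2 * (W * (2 * C₀ * W)) := by
      gcongr
      all_goals exact l2Norm_nonneg
    _ ≤ ((4 + C₀ * R ^ 2) * W) ^ 2 := by
      have hCR : 0 ≤ C₀ * R ^ 2 := by positivity
      nlinarith [mul_nonneg hCR (sq_nonneg W), mul_nonneg (mul_nonneg hCR hCR) (sq_nonneg W)]

end LocalEstimates

theorem l2Norm_iteratedDeriv_le {r : ℕ → ℝ} {κ : ℝ} (hσ : 1 ≤ σ) (hC₀ : 0 ≤ C₀) (hM₀ : 0 ≤ M₀)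
    (hM : 2 * M₀ ≤ M₁) (hκ : 0 < κ) (hκM : 4 + C₀ * r 0 ^ 2 ≤ κ * M₁) (hc : 0 ≤ c)
    (hr : ∀ j, 0 ≤ r j) (hgap : ∀ j, κ ≤ (r j - r (j + 1)) * ((j : ℝ) + 1) ^ σ) (hΩ : IsOpen Ω)
    (hrΩ : Icc (-r 0) (r 0) ⊆ Ω) (ha : ContDiffOn ℝ (⊤ : ℕ∞) a Ω)
    (hh : ContDiffOn ℝ (⊤ : ℕ∞) h Ω)
    (hode : ∀ v ∈ Ω, c • h v - deriv (deriv h) v + a v • h v = 0)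
    (ha_le : ∀ v ∈ Ω, ∀ i, ‖iteratedDeriv i a v‖ ≤ C₀ * gevreyWeight σ M₀ i) (j : ℕ) :
    l2Norm (iteratedDeriv j h) (r j) ≤ gevreyWeight σ M₁ j * l2Norm h (r 0) := by
  have hr_lt (j : ℕ) : r (j + 1) < r j :=
    sub_pos.1 (pos_of_mul_pos_left (hκ.trans_le (hgap j)) (by positivity))
  have hanti : Antitone r := antitone_nat_of_succ_le fun j => (hr_lt j).le
  have hsub (j : ℕ) : Icc (-r j) (r j) ⊆ Ω :=
    (Icc_subset_Icc (neg_le_neg (hanti j.zero_le)) (hanti j.zero_le)).trans hrΩ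
  have hmemLp (j k : ℕ) := memLp_of_continuousOn_Icc (R := r j)
    ((contDiffOn_iteratedDeriv hΩ hh k).continuousOn.mono (hsub j))
  set B := l2Norm h (r 0)
  have hB : 0 ≤ B := l2Norm_nonneg
  induction j using Nat.strong_induction_on with
  | _ n ih =>
  rcases n with _ | j
  · simp [gevreyWeight_zero, B]
  have hprev : ∀ k ≤ j, l2Norm (iteratedDeriv k h) (r j) ≤ gevreyWeight σ M₁ k * B := fun k hk =>
    (l2Norm_mono_radius (hanti hk) (hmemLp k k)).trans (ih k (Nat.lt_succ_of_le hk))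
  have hstep := mul_l2Norm_iteratedDeriv_succ_le hσ hC₀ hM₀ hM hc hB (hr (j + 1)) (hr_lt j) hΩ
    (hsub j) ha hh hode ha_le hprev
  have hw : 0 ≤ gevreyWeight σ M₁ j := gevreyWeight_nonneg (by linarith) j
  have hX : 0 ≤ l2Norm (iteratedDeriv (j + 1) h) (r (j + 1)) := l2Norm_nonneg
  refine le_of_mul_le_mul_left ?_ hκ
  calc κ * l2Norm (iteratedDeriv (j + 1) h) (r (j + 1))
      ≤ (r j - r (j + 1)) * ((j : ℝ) + 1) ^ σ * l2Norm (iteratedDeriv (j + 1) h) (r (j + 1)) := by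
        gcongr; exact hgap j
    _ = ((j : ℝ) + 1) ^ σ * ((r j - r (j + 1)) * l2Norm (iteratedDeriv (j + 1) h) (r (j + 1))) := by
        ring
    _ ≤ ((j : ℝ) + 1) ^ σ * ((4 + C₀ * r j ^ 2) * (gevreyWeight σ M₁ j * B)) := by gcongr
    _ ≤ ((j : ℝ) + 1) ^ σ * (κ * M₁ * (gevreyWeight σ M₁ j * B)) := by
        gcongr
        refine le_trans ?_ hκM
        gcongr
        exacts [hr j, hanti j.zero_le]
    _ = κ * (gevreyWeight σ M₁ (j + 1) * B) := by rw [gevreyWeight_succ]; ring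

end GevreyRegularity

theorem stmt8_general {A E : Type*} [NormedRing A] [NormedAlgebra ℝ A] [NormedAddCommGroup E]
    [InnerProductSpace ℝ E] [Module A E] [IsBoundedSMul A E] [IsScalarTower ℝ A E]
    {σ δ C₀ M₀ : ℝ} (hδ : 0 < δ) (hσ : 1 + δ ≤ σ) (hC₀ : 0 ≤ C₀) (hM₀ : 0 ≤ M₀) :
    ∃ M₁ > (0 : ℝ), ∀ (a : ℝ → A) (h : ℝ → E) (m : ℝ),
      ContDiffOn ℝ (⊤ : ℕ∞) a (Ioo (-1) 1) →
      (∀ v ∈ Ioo (-1 : ℝ) 1, ∀ i, ‖iteratedDeriv i a v‖ ≤ C₀ * gevreyWeight σ M₀ i) →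
      ContDiffOn ℝ (⊤ : ℕ∞) h (Ioo (-1) 1) →
      (∀ v ∈ Ioo (-1 : ℝ) 1, m ^ 2 • h v - deriv (deriv h) v + a v • h v = 0) →
      IntervalIntegrable (fun v => ‖h v‖ ^ 2) volume (-1) 1 →
      ∀ j, √(∫ v in (-gevreyRadius δ j)..(gevreyRadius δ j), ‖iteratedDeriv j h v‖ ^ 2)
        ≤ gevreyWeight σ M₁ j * √(∫ v in (-1)..1, ‖h v‖ ^ 2) := by
  set κ := δ / 2 * (10 : ℝ) ^ (-σ)
  have hκ : 0 < κ := by positivity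
  have hr (j : ℕ) : 0 ≤ gevreyRadius δ j := (gevreyRadius_pos δ j).le
  have hr_lt := gevreyRadius_lt_one hδ
  have hsub (j : ℕ) : Icc (-gevreyRadius δ j) (gevreyRadius δ j) ⊆ Ioo (-1) 1 :=
    Icc_subset_Ioo (neg_lt_neg (hr_lt j)) (hr_lt j)
  have hκM : 4 + C₀ * gevreyRadius δ 0 ^ 2 ≤ κ * (2 * M₀ + (4 + C₀) / κ) := by
    have hr_sq : gevreyRadius δ 0 ^ 2 ≤ 1 := pow_le_one₀ (hr 0) (hr_lt 0).le
    rw [mul_add, mul_div_cancel₀ _ hκ.ne']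
    nlinarith [mul_nonneg hκ.le hM₀]
  refine ⟨2 * M₀ + (4 + C₀) / κ, by positivity, fun a h m ha ha_le hh hode hintegrable j => ?_⟩
  have hh_meas : AEStronglyMeasurable h (volume.restrict (Ioc (-1) 1)) := by
    rw [← restrict_Ioo_eq_restrict_Ioc]
    exact hh.continuousOn.aestronglyMeasurable measurableSet_Ioo
  have hh_memLp : MemLp h 2 (volume.restrict (Ioc (-1) 1)) :=
    (memLp_two_iff_integrable_sq_norm hh_meas).2 hintegrable.1
  have hcont := (contDiffOn_iteratedDeriv isOpen_Ioo hh j).continuousOn.mono (hsub j)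
  rw [← l2Norm_eq_sqrt (hr j) (memLp_of_continuousOn_Icc hcont).1,
    ← l2Norm_eq_sqrt zero_le_one hh_meas]
  refine (l2Norm_iteratedDeriv_le (by linarith) hC₀ hM₀
    (le_add_of_nonneg_right (by positivity)) hκ hκM (sq_nonneg m) hr
    (le_gevreyRadius_sub_succ_mul_rpow hδ.le hσ) isOpen_Ioo (hsub 0) ha hh hode ha_le j).trans ?_
  gcongr
  · exact gevreyWeight_nonneg (by positivity) j
  · exact l2Norm_mono_radius (hr_lt 0).le hh_memLp

/-- Gevrey interior estimates for `(m² − ∂_v²)h + a·h = 0` on `(−1,1)` with Gevrey-`1/s`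
coefficient `a`: the j-th derivative of `h` on the shrinking intervals `(−r_j, r_j)`,
`r_j = 1/2 + 1/(2(9+j)^δ)`, is bounded by `M₁^j (j!)^{1/s}`. -/
theorem stmt8 (s δ C₀ M₀ : ℝ) (hs : s ∈ Set.Ioo (0:ℝ) 1)
    (hδ : δ ∈ Set.Ioo (0:ℝ) (1/s - 1)) (hC₀ : 1 ≤ C₀) (hM₀ : 1 ≤ M₀) :
    ∃ M₁ > (0:ℝ), ∀ (a h : ℝ → ℝ) (m : ℝ),
      ContDiffOn ℝ (⊤ : ℕ∞) a (Set.Ioo (-1) 1) →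
      (∀ v ∈ Set.Ioo (-1:ℝ) 1, ∀ α : ℕ,
        |iteratedDeriv α a v| ≤ C₀ * M₀ ^ α * ((α.factorial : ℝ)) ^ (1/s)) →
      ContDiffOn ℝ (⊤ : ℕ∞) h (Set.Ioo (-1) 1) →
      (∀ v ∈ Set.Ioo (-1:ℝ) 1, m ^ 2 * h v - deriv (deriv h) v + a v * h v = 0) →
      (∫ v in (-1:ℝ)..1, (h v) ^ 2) = 1 →
      ∀ j : ℕ,
        Real.sqrt (∫ v in (-(1/2 + 1/(2*((9:ℝ)+j)^δ)))..(1/2 + 1/(2*((9:ℝ)+j)^δ)),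
          (iteratedDeriv j h v) ^ 2) ≤ M₁ ^ j * ((j.factorial : ℝ)) ^ (1/s) := by
  obtain ⟨M₁, hM₁, H⟩ := stmt8_general (A := ℝ) (E := ℝ) (σ := 1 / s) hδ.1 (by linarith [hδ.2])
    (zero_le_one.trans hC₀) (zero_le_one.trans hM₀)
  exact ⟨M₁, hM₁, fun a h m ha ha_le hh hode hnorm j => by
    simpa [gevreyWeight, gevreyRadius, hnorm] using
      H a h m ha (by simpa [gevreyWeight, mul_assoc] using ha_le) hh hode
        (intervalIntegral.intervalIntegrable_of_integral_ne_zero (by simp [hnorm])) j⟩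
end

section
/- Let w ≤ −10, β ∈ ℝ with 0 < |β| small, and let k ∈ ℤ, k ≥ 1. Suppose g ∈ H¹_loc(ℝ) is real-valued (or complex), satisfies sup_j [‖e^{|v|}g‖_{L²(j,j+2)} + ‖e^{|v|}g'‖_{L²(j,j+2)}] < ∞, solves (k² − ∂_v²)g(v) + (8e^{2v}/(e^{2v} − 1))·g(v) = 0 in the sense of distributions on ℝ, and g(0) = 0. Then g ≡ 0 on ℝ. -/
open Real Set Filter Topology MeasureTheory

/-!
Write the equation as `g'' = U g` with `U = k² + 8e^{2v}/(e^{2v} − 1)`. Two integrations against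
test functions (du Bois-Reymond) show that `g` is `C¹` with absolutely continuous derivative `G`,
even though `U` is singular at the vortex centre. For `v > 0` the potential is nonnegative, hence
`(g²)'' = 2G² + 2U g² ≥ 0`: a convex function vanishing at `0` that is positive somewhere grows at
least linearly, which a uniform local `L²` bound excludes. So `g = 0` on `[0, ∞)` and `G 0 = 0`.
For `v < 0` the singularity is only `|U v| ≲ 1/|v|`, which the factor `|v|` gained in
`|g v| ≤ |v| sup |G|` absorbs, so that Gronwall's inequality still gives uniqueness.
-/

/-- Test functions on the line, in the sense of distribution theory. They are kept unbundled, so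
that they match smooth compactly supported functions given as such. -/
structure IsTestFunction (φ : ℝ → ℝ) : Prop where
  contDiff : ContDiff ℝ (⊤ : ℕ∞) φ
  hasCompactSupport : HasCompactSupport φ

/-- `F` is locally absolutely continuous with derivative `f`, i.e. `F ∈ W^{1,1}_loc` with weak
derivative `f`. This is encoded by the fundamental theorem of calculus, so `F` is the continuous
representative, while `f` matters only up to null sets. -/
structure IsPrimitive {E : Type*} [NormedAddCommGroup E] [NormedSpace ℝ E] (F f : ℝ → E) :
    Prop where
  locallyIntegrable : LocallyIntegrable f
  sub_eq_integral : ∀ a b, F b - F a = ∫ x in a..b, f x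

/-- `g` solves `g'' = U g` in the sense of distributions. Local integrability of `U g` is part of
the notion, since `U` may be too singular for it to follow from regularity of `g`. -/
structure IsWeakSolution (U g : ℝ → ℝ) : Prop where
  locallyIntegrable : LocallyIntegrable fun x => U x * g x
  integral_eq : ∀ φ, IsTestFunction φ →
    ∫ x, deriv (deriv φ) x * g x = ∫ x, φ x * (U x * g x)

lemma intervalIntegrable_of_locallyIntegrable {E : Type*} [NormedAddCommGroup E] {f : ℝ → E}
    (hf : LocallyIntegrable f) (a b : ℝ) : IntervalIntegrable f volume a b :=
  intervalIntegrable_iff.mpr <|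
    (hf.integrableOn_isCompact isCompact_uIcc).mono_set uIoc_subset_uIcc

section VectorValued

variable {E : Type*} [NormedAddCommGroup E] [NormedSpace ℝ E]

lemma isPrimitive_intervalIntegral {f : ℝ → E} (hf : LocallyIntegrable f) (a : ℝ) :
    IsPrimitive (fun x => ∫ t in a..x, f t) f :=
  ⟨hf, fun _ _ => intervalIntegral.integral_interval_sub_left
    (intervalIntegrable_of_locallyIntegrable hf _ _)
    (intervalIntegrable_of_locallyIntegrable hf _ _)⟩

namespace IsPrimitive

variable {F f : ℝ → E}

lemma eq_add_integral (h : IsPrimitive F f) (a : ℝ) : F = fun x => F a + ∫ t in a..x, f t := by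
  funext x
  rw [← h.sub_eq_integral, add_sub_cancel]

lemma continuous (h : IsPrimitive F f) : Continuous F := by
  rw [h.eq_add_integral 0]
  exact continuous_const.add (intervalIntegral.continuous_primitive
    (intervalIntegrable_of_locallyIntegrable h.locallyIntegrable) 0)

lemma add_const (h : IsPrimitive F f) (c : E) : IsPrimitive (fun x => F x + c) f :=
  ⟨h.locallyIntegrable, fun a b => by rw [add_sub_add_right_eq_sub, h.sub_eq_integral]⟩

lemma neg (h : IsPrimitive F f) : IsPrimitive (fun x => -F x) fun x => -f x :=
  ⟨h.locallyIntegrable.neg, fun a b => by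
    rw [intervalIntegral.integral_neg, ← h.sub_eq_integral, neg_sub_neg, neg_sub]⟩

lemma comp_neg (h : IsPrimitive F f) : IsPrimitive (fun x => F (-x)) (fun x => -f (-x)) where
  locallyIntegrable := by
    refine LocallyIntegrable.neg ?_
    have h' := h.locallyIntegrable
    rw [← Measure.map_neg_eq_self (volume : Measure ℝ)] at h'
    exact (locallyIntegrable_map_homeomorph (Homeomorph.neg ℝ)).mp h'
  sub_eq_integral a b := by
    rw [h.sub_eq_integral, intervalIntegral.integral_neg, intervalIntegral.integral_comp_neg,
      intervalIntegral.integral_symm]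

lemma integral_eq_sub (h : IsPrimitive F f) (hf : Integrable f) {l m : E}
    (hbot : Tendsto F atBot (𝓝 l)) (htop : Tendsto F atTop (𝓝 m)) : ∫ x, f x = m - l := by
  have hlim : Tendsto (fun R : ℝ => ∫ x in -R..R, f x) atTop (𝓝 (m - l)) := by
    simp only [← h.sub_eq_integral]
    exact htop.sub (hbot.comp tendsto_neg_atTop_atBot)
  exact tendsto_nhds_unique
    (intervalIntegral_tendsto_integral hf tendsto_neg_atTop_atBot tendsto_id) hlim

variable [CompleteSpace E]

lemma hasDerivAt (h : IsPrimitive F f) (hf : Continuous f) (x : ℝ) : HasDerivAt F (f x) x := by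
  rw [h.eq_add_integral x]
  exact (hf.integral_hasStrictDerivAt x x).hasDerivAt.const_add _

lemma ae_hasDerivAt (h : IsPrimitive F f) : ∀ᵐ x, HasDerivAt F (f x) x := by
  filter_upwards [LocallyIntegrable.ae_hasDerivAt_integral h.locallyIntegrable] with x hx
  rw [h.eq_add_integral 0]
  exact (hx 0).const_add _

lemma ae_eq {f' : ℝ → E} (h : IsPrimitive F f) (h' : IsPrimitive F f') : f =ᵐ[volume] f' := by
  filter_upwards [h.ae_hasDerivAt, h'.ae_hasDerivAt] with x hx hx'
  exact hx.unique hx'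

end IsPrimitive

lemma isPrimitive_of_hasDerivAt [CompleteSpace E] {F f : ℝ → E} (h : ∀ x, HasDerivAt F (f x) x)
    (hf : Continuous f) : IsPrimitive F f :=
  ⟨hf.locallyIntegrable, fun a b =>
    (intervalIntegral.integral_eq_sub_of_hasDerivAt (fun x _ => h x)
      (hf.intervalIntegrable a b)).symm⟩

end VectorValued

namespace IsPrimitive

variable {F f G g : ℝ → ℝ}

lemma absolutelyContinuousOnInterval (h : IsPrimitive F f) (a b : ℝ) :
    AbsolutelyContinuousOnInterval F a b := by
  have hint := (intervalIntegrable_of_locallyIntegrable h.locallyIntegrable a b)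
    |>.absolutelyContinuousOnInterval_intervalIntegral left_mem_uIcc
  have hconst : AbsolutelyContinuousOnInterval (fun _ : ℝ => F a) a b :=
    (LipschitzWith.const (F a)).lipschitzOnWith.absolutelyContinuousOnInterval
  rw [h.eq_add_integral a]
  exact hconst.add hint

lemma mul (hF : IsPrimitive F f) (hG : IsPrimitive G g) :
    IsPrimitive (fun x => F x * G x) (fun x => f x * G x + F x * g x) where
  locallyIntegrable :=
    (hF.locallyIntegrable.mul_continuous hG.continuous).add
      (hG.locallyIntegrable.continuous_mul hF.continuous)
  sub_eq_integral a b := by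
    rw [← (hF.absolutelyContinuousOnInterval a b).integral_deriv_mul_eq_sub
      (hG.absolutelyContinuousOnInterval a b)]
    refine intervalIntegral.integral_congr_ae ?_
    filter_upwards [hF.ae_hasDerivAt, hG.ae_hasDerivAt] with x hFx hGx _
    rw [hFx.deriv, hGx.deriv]

lemma monotoneOn {a : ℝ} (h : IsPrimitive F f) (hf : ∀ x ∈ Ioi a, 0 ≤ f x) :
    MonotoneOn F (Ici a) := by
  intro x hx y _ hxy
  rw [← sub_nonneg, h.sub_eq_integral, intervalIntegral.integral_of_le hxy]
  exact setIntegral_nonneg measurableSet_Ioc fun t ht => hf t (lt_of_le_of_lt hx ht.1)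

end IsPrimitive

namespace IsTestFunction

variable {φ ψ η : ℝ → ℝ}

lemma deriv (hφ : IsTestFunction φ) : IsTestFunction (deriv φ) :=
  ⟨(contDiff_infty_iff_deriv.mp hφ.contDiff).2, hφ.hasCompactSupport.deriv⟩

lemma hasDerivAt (hφ : IsTestFunction φ) (x : ℝ) : HasDerivAt φ (_root_.deriv φ x) x :=
  ((contDiff_infty_iff_deriv.mp hφ.contDiff).1 x).hasDerivAt

lemma isPrimitive_deriv (hφ : IsTestFunction φ) : IsPrimitive φ (_root_.deriv φ) :=
  isPrimitive_of_hasDerivAt hφ.hasDerivAt hφ.deriv.contDiff.continuous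

lemma integrable (hφ : IsTestFunction φ) : Integrable φ :=
  hφ.contDiff.continuous.integrable_of_hasCompactSupport hφ.hasCompactSupport

lemma integrable_smul {E : Type*} [NormedAddCommGroup E] [NormedSpace ℝ E] {f : ℝ → E}
    (hφ : IsTestFunction φ) (hf : LocallyIntegrable f) : Integrable fun x => φ x • f x :=
  hf.integrable_smul_left_of_hasCompactSupport hφ.contDiff.continuous hφ.hasCompactSupport

lemma integrable_mul {f : ℝ → ℝ} (hφ : IsTestFunction φ) (hf : LocallyIntegrable f) :
    Integrable fun x => φ x * f x :=
  hφ.integrable_smul hf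

lemma sub_const_mul (hψ : IsTestFunction ψ) (hη : IsTestFunction η) (m : ℝ) :
    IsTestFunction fun x => ψ x - m * η x :=
  ⟨hψ.contDiff.sub (contDiff_const.mul hη.contDiff),
    hψ.hasCompactSupport.sub hη.hasCompactSupport.mul_left⟩

lemma exists_integral_eq_one : ∃ η, IsTestFunction η ∧ ∫ x, η x = 1 :=
  let b : ContDiffBump (0 : ℝ) := ⟨1, 2, one_pos, one_lt_two⟩
  ⟨b.normed volume, ⟨b.contDiff_normed, b.hasCompactSupport_normed⟩, b.integral_normed⟩

lemma exists_deriv_eq (hψ : IsTestFunction ψ) (h0 : ∫ x, ψ x = 0) :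
    ∃ Φ, IsTestFunction Φ ∧ _root_.deriv Φ = ψ := by
  obtain ⟨R, -, hR⟩ := hψ.hasCompactSupport.isCompact.isBounded.subset_ball_lt 0 0
  rw [Real.ball_eq_Ioo, zero_sub, zero_add] at hR
  have hΦ := isPrimitive_intervalIntegral hψ.contDiff.continuous.locallyIntegrable (-R)
  have hderiv : _root_.deriv (fun x => ∫ t in -R..x, ψ t) = ψ :=
    funext fun x => (hΦ.hasDerivAt hψ.contDiff.continuous x).deriv
  refine ⟨fun x => ∫ t in -R..x, ψ t, ⟨?_, ?_⟩, hderiv⟩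
  · rw [contDiff_infty_iff_deriv, hderiv]
    exact ⟨fun x => (hΦ.hasDerivAt hψ.contDiff.continuous x).differentiableAt, hψ.contDiff⟩
  · refine HasCompactSupport.intro (K := Icc (-R) R) isCompact_Icc fun x hx => ?_
    rcases lt_or_ge x (-R) with hleft | hge
    · refine intervalIntegral.integral_zero_ae (ae_of_all _ fun t ht => ?_)
      rw [uIoc_of_ge hleft.le] at ht
      exact image_eq_zero_of_notMem_tsupport fun hmem => ht.2.not_gt (hR hmem).1
    · have hright : R < x := lt_of_not_ge fun hle => hx ⟨hge, hle⟩
      have hsub : Function.support ψ ⊆ Ioc (-R) x := fun t ht =>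
        have htR := hR (subset_tsupport _ ht)
        ⟨htR.1, htR.2.le.trans hright.le⟩
      rw [intervalIntegral.integral_eq_integral_of_support_subset hsub, h0]

lemma exists_deriv_eq_sub (hψ : IsTestFunction ψ) (hη : IsTestFunction η) (hη1 : ∫ x, η x = 1) :
    ∃ Φ, IsTestFunction Φ ∧ _root_.deriv Φ = fun x => ψ x - (∫ t, ψ t) * η x := by
  refine (hψ.sub_const_mul hη _).exists_deriv_eq ?_
  rw [integral_sub hψ.integrable (hη.integrable.const_mul _), integral_const_mul, hη1, mul_one,
    sub_self]

end IsTestFunction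

lemma IsPrimitive.integral_deriv_mul {F f φ : ℝ → ℝ} (hF : IsPrimitive F f)
    (hφ : IsTestFunction φ) : ∫ x, deriv φ x * F x = -∫ x, φ x * f x := by
  have hint₁ : Integrable fun x => deriv φ x * F x :=
    hφ.deriv.integrable_mul hF.continuous.locallyIntegrable
  have hint₂ : Integrable fun x => φ x * f x := hφ.integrable_mul hF.locallyIntegrable
  have hzero : Tendsto (fun x => φ x * F x) (cocompact ℝ) (𝓝 0) :=
    (hφ.hasCompactSupport.mul_right (f' := F)).is_zero_at_infty
  rw [cocompact_eq_atBot_atTop, tendsto_sup] at hzero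
  have htotal := (hφ.isPrimitive_deriv.mul hF).integral_eq_sub (hint₁.add hint₂) hzero.1 hzero.2
  rw [integral_add hint₁ hint₂, sub_zero] at htotal
  exact eq_neg_of_add_eq_zero_left htotal

section DuBoisReymond

variable {E : Type*} [NormedAddCommGroup E] [NormedSpace ℝ E] {f : ℝ → E}

lemma integral_sub_const_mul_smul {ψ η : ℝ → ℝ} (hf : LocallyIntegrable f)
    (hψ : IsTestFunction ψ) (hη : IsTestFunction η) (m : ℝ) :
    ∫ x, (ψ x - m * η x) • f x = (∫ x, ψ x • f x) - m • ∫ x, η x • f x := by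
  simp only [sub_smul, mul_smul]
  have hη_int : Integrable fun x => m • η x • f x := (hη.integrable_smul hf).smul m
  rw [integral_sub (hψ.integrable_smul hf) hη_int, integral_smul]

variable [CompleteSpace E]

lemma ae_eq_const_of_integral_deriv_smul_eq_zero (hf : LocallyIntegrable f)
    (h : ∀ φ, IsTestFunction φ → ∫ x, deriv φ x • f x = 0) : ∃ c, ∀ᵐ x, f x = c := by
  obtain ⟨η, hη, hη1⟩ := IsTestFunction.exists_integral_eq_one
  refine ⟨∫ x, η x • f x, ae_eq_of_integral_contDiff_smul_eq hf (locallyIntegrable_const _)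
    fun ψ hψsmooth hψsupp => ?_⟩
  have hψ : IsTestFunction ψ := ⟨hψsmooth, hψsupp⟩
  obtain ⟨Φ, hΦ, hΦ'⟩ := hψ.exists_deriv_eq_sub hη hη1
  have hzero := h Φ hΦ
  rw [hΦ', integral_sub_const_mul_smul hf hψ hη, sub_eq_zero] at hzero
  rw [hzero, integral_smul_const]

lemma ae_eq_affine_of_integral_deriv_deriv_smul_eq_zero (hf : LocallyIntegrable f)
    (h : ∀ φ, IsTestFunction φ → ∫ x, deriv (deriv φ) x • f x = 0) :
    ∃ a b, ∀ᵐ x, f x = a + x • b := by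
  obtain ⟨η, hη, hη1⟩ := IsTestFunction.exists_integral_eq_one
  set b : E := -∫ x, deriv η x • f x with hb
  have hderiv (ψ : ℝ → ℝ) (hψ : IsTestFunction ψ) :
      ∫ x, deriv ψ x • f x = -((∫ x, ψ x) • b) := by
    obtain ⟨Φ, hΦ, hΦ'⟩ := hψ.exists_deriv_eq_sub hη hη1
    have hΦ'' : deriv (deriv Φ) = fun x => deriv ψ x - (∫ t, ψ t) * deriv η x := by
      funext x
      rw [hΦ']
      exact ((hψ.hasDerivAt x).sub ((hη.hasDerivAt x).const_mul _)).deriv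
    have hzero := h Φ hΦ
    rw [hΦ'', integral_sub_const_mul_smul hf hψ.deriv hη.deriv, sub_eq_zero] at hzero
    rw [hzero, hb, smul_neg, neg_neg]
  have hlin : LocallyIntegrable fun x : ℝ => x • b := by
    exact (continuous_id.smul continuous_const).locallyIntegrable
  have hid : IsPrimitive (fun x : ℝ => x) fun _ => 1 :=
    isPrimitive_of_hasDerivAt hasDerivAt_id continuous_const
  obtain ⟨a, ha⟩ := ae_eq_const_of_integral_deriv_smul_eq_zero (hf.sub hlin) fun ψ hψ => by
    have hmoment : ∫ x, deriv ψ x • x • b = -((∫ x, ψ x) • b) := by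
      simp only [smul_smul]
      rw [integral_smul_const, hid.integral_deriv_mul hψ]
      simp only [mul_one, neg_smul]
    simp only [Pi.sub_apply, smul_sub]
    rw [integral_sub (hψ.deriv.integrable_smul hf) (hψ.deriv.integrable_smul hlin), hderiv ψ hψ,
      hmoment, sub_self]
  refine ⟨a, b, ?_⟩
  filter_upwards [ha] with x hx
  rw [← hx, Pi.sub_apply, sub_add_cancel]

end DuBoisReymond

lemma exists_isPrimitive_of_integral_deriv_deriv_mul {g W : ℝ → ℝ} (hg : Continuous g)
    (hW : LocallyIntegrable W)
    (h : ∀ φ, IsTestFunction φ → ∫ x, deriv (deriv φ) x * g x = ∫ x, φ x * W x) :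
    ∃ G, IsPrimitive g G ∧ IsPrimitive G W := by
  have hG₀ := isPrimitive_intervalIntegral hW 0
  set G₀ : ℝ → ℝ := fun x => ∫ t in 0..x, W t
  have hH := isPrimitive_intervalIntegral hG₀.continuous.locallyIntegrable 0
  set H : ℝ → ℝ := fun x => ∫ t in 0..x, G₀ t
  have hgH : Continuous fun x => g x - H x := hg.sub hH.continuous
  obtain ⟨a, b, hab⟩ := ae_eq_affine_of_integral_deriv_deriv_smul_eq_zero
    hgH.locallyIntegrable fun φ hφ => by
      simp only [smul_eq_mul, mul_sub]
      rw [integral_sub (hφ.deriv.deriv.integrable_mul hg.locallyIntegrable)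
        (hφ.deriv.deriv.integrable_mul hH.continuous.locallyIntegrable),
        h φ hφ, hH.integral_deriv_mul hφ.deriv, hG₀.integral_deriv_mul hφ, neg_neg, sub_self]
  have haffine : Continuous fun x : ℝ => a + x • b := by fun_prop
  have hg_eq : g = fun x => H x + (a + x * b) := funext fun x =>
    sub_eq_iff_eq_add'.mp (congrFun ((hgH.ae_eq_iff_eq volume haffine).mp hab) x)
  have hgG : ∀ x, HasDerivAt g (G₀ x + b) x := fun x => by
    rw [hg_eq]
    exact (hH.hasDerivAt hG₀.continuous x).add ((hasDerivAt_mul_const b).const_add a)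
  exact ⟨fun x => G₀ x + b,
    isPrimitive_of_hasDerivAt hgG (hG₀.continuous.add continuous_const), hG₀.add_const b⟩

lemma locallyIntegrable_of_integrable_test_smul {E : Type*} [NormedAddCommGroup E]
    [NormedSpace ℝ E] {u : ℝ → E}
    (h : ∀ φ, IsTestFunction φ → Integrable fun x => φ x • u x) : LocallyIntegrable u := by
  intro x
  let b : ContDiffBump x := ⟨1, 2, one_pos, one_lt_two⟩
  refine ⟨Metric.closedBall x 1, Metric.closedBall_mem_nhds x one_pos, ?_⟩
  refine (h b ⟨b.contDiff, b.hasCompactSupport⟩).integrableOn.congr_fun (fun y hy => ?_)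
    measurableSet_closedBall
  simp only [b.one_of_mem_closedBall hy, one_smul]

lemma isWeakSolution_const_add {c : ℝ} {V g : ℝ → ℝ} (hg : Continuous g)
    (h : ∀ φ : ℝ → ℝ, ContDiff ℝ (⊤ : ℕ∞) φ → HasCompactSupport φ →
      Integrable (fun v => V v * g v * φ v) ∧
      ∫ v, (g v * (c * φ v - deriv (deriv φ) v) + V v * g v * φ v) = 0) :
    IsWeakSolution (fun v => c + V v) g := by
  have hVg : LocallyIntegrable fun v => V v * g v :=
    locallyIntegrable_of_integrable_test_smul fun φ hφ =>
      (h φ hφ.contDiff hφ.hasCompactSupport).1.congr (ae_of_all _ fun v => mul_comm _ _)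
  have hW : LocallyIntegrable fun v => (c + V v) * g v := by
    simp only [add_mul]
    exact (continuous_const.mul hg).locallyIntegrable.add hVg
  refine ⟨hW, fun φ hφ => ?_⟩
  have hzero : ∫ v, (φ v * ((c + V v) * g v) - deriv (deriv φ) v * g v) = 0 := by
    rw [← (h φ hφ.contDiff hφ.hasCompactSupport).2]
    exact integral_congr_ae (ae_of_all _ fun v => by ring)
  rw [integral_sub (hφ.integrable_mul hW)
    (hφ.deriv.deriv.integrable_mul hg.locallyIntegrable)] at hzero
  exact (sub_eq_zero.mp hzero).symm

lemma IsWeakSolution.exists_isPrimitive {U g : ℝ → ℝ} (h : IsWeakSolution U g)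
    (hg : Continuous g) : ∃ G, IsPrimitive g G ∧ IsPrimitive G fun x => U x * g x :=
  exists_isPrimitive_of_integral_deriv_deriv_mul hg h.locallyIntegrable h.integral_eq

lemma IsPrimitive.convexOn_sq {a : ℝ} {g G W : ℝ → ℝ} (hg : IsPrimitive g G)
    (hG : IsPrimitive G W) (hgW : ∀ x ∈ Ioi a, 0 ≤ g x * W x) :
    ConvexOn ℝ (Ici a) fun x => g x ^ 2 := by
  have hmono : MonotoneOn (fun x => g x * G x) (Ici a) :=
    (hg.mul hG).monotoneOn fun x hx => add_nonneg (mul_self_nonneg _) (hgW x hx)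
  have hderiv : ∀ x, HasDerivAt (fun x => g x ^ 2) (2 * (g x * G x)) x := fun x => by
    exact ((hg.hasDerivAt hG.continuous x).pow 2).congr_deriv (by push_cast; ring)
  refine MonotoneOn.convexOn_of_deriv (convex_Ici a) (hg.continuous.pow 2).continuousOn
    (fun x _ => (hderiv x).differentiableAt.differentiableWithinAt) ?_
  rw [funext fun x => (hderiv x).deriv]
  exact fun x hx y hy hxy => mul_le_mul_of_nonneg_left
    (hmono (interior_subset hx) (interior_subset hy) hxy) zero_le_two

lemma mul_le_mul_of_convexOn_Ici {φ : ℝ → ℝ} (hφ : ConvexOn ℝ (Ici 0) φ) (h0 : φ 0 ≤ 0)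
    {v x : ℝ} (hv : 0 ≤ v) (hvx : v ≤ x) : x * φ v ≤ v * φ x := by
  rcases hv.eq_or_lt with rfl | hv
  · simpa using mul_nonpos_of_nonneg_of_nonpos hvx h0
  have hx : 0 < x := hv.trans_le hvx
  have hcomb := hφ.2 (mem_Ici.mpr le_rfl) (mem_Ici.mpr hx.le)
    (sub_nonneg.mpr ((div_le_one hx).mpr hvx)) (div_nonneg hv.le hx.le) (sub_add_cancel 1 (v / x))
  simp only [smul_eq_mul, mul_zero, zero_add, div_mul_cancel₀ v hx.ne'] at hcomb
  have hle : φ v ≤ v / x * φ x := by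
    nlinarith [mul_nonpos_of_nonneg_of_nonpos (sub_nonneg.mpr ((div_le_one hx).mpr hvx)) h0]
  calc x * φ v ≤ x * (v / x * φ x) := by gcongr
    _ = v * φ x := by field_simp

lemma nonpos_of_convexOn_of_integral_le {φ : ℝ → ℝ} {M : ℝ} (hφ : ConvexOn ℝ (Ici 0) φ)
    (h0 : φ 0 ≤ 0) (hM : ∀ j : ℕ, ∫ x in (j : ℝ)..(j + 2), φ x ≤ M) {v : ℝ} (hv : 0 ≤ v) :
    φ v ≤ 0 := by
  by_contra! hpos
  obtain ⟨j, hj⟩ := exists_nat_gt (max v (v * M / φ v))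
  have hvj : v < j := (le_max_left _ _).trans_lt hj
  have hj0 : (0 : ℝ) < j := hv.trans_lt hvj
  have hMj : v * M < j * φ v := (div_lt_iff₀ hpos).mp ((le_max_right _ _).trans_lt hj)
  have hint : IntervalIntegrable φ volume j (j + 2) := by
    refine (hφ.continuousOn_interior.mono fun x hx => ?_).intervalIntegrable
    rw [uIcc_of_le (by linarith)] at hx
    rw [interior_Ici]
    exact hj0.trans_le hx.1
  have hlow : ∫ _ in (j : ℝ)..(j + 2), j * φ v ≤ ∫ x in (j : ℝ)..(j + 2), v * φ x := by
    refine intervalIntegral.integral_mono_on (by linarith) intervalIntegrable_const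
      (hint.const_mul v) fun x hx => ?_
    exact (mul_le_mul_of_nonneg_right hx.1 hpos.le).trans
      (mul_le_mul_of_convexOn_Ici hφ h0 hv (hvj.le.trans hx.1))
  rw [intervalIntegral.integral_const, intervalIntegral.integral_const_mul, smul_eq_mul,
    add_sub_cancel_left] at hlow
  linarith [mul_le_mul_of_nonneg_left (hM j) hv, mul_pos hj0 hpos]

section Uniqueness

variable {E : Type*} [NormedAddCommGroup E]

lemma eq_zero_of_norm_le_mul_integral_norm {u : ℝ → E} {C a b : ℝ} (hu : Continuous u)
    (h : ∀ t ∈ Icc a b, ‖u t‖ ≤ C * ∫ s in a..t, ‖u s‖) : ∀ t ∈ Icc a b, u t = 0 := by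
  have hderiv : ∀ t, HasDerivAt (fun t => ∫ s in a..t, ‖u s‖) ‖u t‖ t := fun t =>
    (hu.norm.integral_hasStrictDerivAt a t).hasDerivAt
  have hzero : ∀ t ∈ Icc a b, ∫ s in a..t, ‖u s‖ = 0 := by
    refine eq_zero_of_abs_deriv_le_mul_abs_self_of_eq_zero_right (K := C)
      (fun t _ => (hderiv t).continuousAt.continuousWithinAt)
      (fun t _ => (hderiv t).hasDerivWithinAt) intervalIntegral.integral_same fun t ht => ?_
    rw [norm_norm, Real.norm_of_nonneg
      (intervalIntegral.integral_nonneg ht.1 fun s _ => norm_nonneg (u s))]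
    exact h t (Ico_subset_Icc_self ht)
  intro t ht
  simpa [hzero t ht] using h t ht

variable [NormedSpace ℝ E]

lemma IsPrimitive.norm_le_integral_norm {F f : ℝ → E} (h : IsPrimitive F f) (h0 : F 0 = 0)
    {s t : ℝ} (hs : 0 ≤ s) (hst : s ≤ t) : ‖F s‖ ≤ ∫ x in 0..t, ‖f x‖ := by
  have hint := (intervalIntegrable_of_locallyIntegrable h.locallyIntegrable 0 t).norm
  calc ‖F s‖ = ‖∫ x in 0..s, f x‖ := by rw [← h.sub_eq_integral, h0, sub_zero]
    _ ≤ ∫ x in 0..s, ‖f x‖ := intervalIntegral.norm_integral_le_integral_norm hs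
    _ ≤ ∫ x in 0..t, ‖f x‖ := intervalIntegral.integral_mono_interval le_rfl hs hst
        (ae_of_all _ fun x => norm_nonneg (f x)) hint

lemma eq_zero_of_abs_mul_potential_le {g G : ℝ → E} {U : ℝ → ℝ} {C T : ℝ}
    (hg : IsPrimitive g G) (hG : IsPrimitive G fun x => U x • g x) (hg0 : g 0 = 0) (hG0 : G 0 = 0)
    (hU : ∀ x ∈ Ioc 0 T, |x * U x| ≤ C) : ∀ x ∈ Icc 0 T, g x = 0 := by
  have hW : LocallyIntegrable fun x => ‖U x • g x‖ := fun x =>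
    (hG.locallyIntegrable x).imp fun s hs => ⟨hs.1, hs.2.norm⟩
  have hP := isPrimitive_intervalIntegral hW 0
  set P : ℝ → ℝ := fun t => ∫ x in 0..t, ‖U x • g x‖ with hP_def
  have hP_nonneg : ∀ t, 0 ≤ t → 0 ≤ P t := fun t ht =>
    intervalIntegral.integral_nonneg ht fun x _ => norm_nonneg _
  have hgP : ∀ t, 0 ≤ t → ‖g t‖ ≤ P t * t := fun t ht => by
    have hbound := intervalIntegral.norm_integral_le_of_norm_le_const (a := 0) (b := t) (f := G)
      (C := P t) fun s hs => by
        rw [uIoc_of_le ht] at hs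
        exact hG.norm_le_integral_norm hG0 hs.1.le hs.2
    rwa [← hg.sub_eq_integral, hg0, sub_zero, sub_zero, abs_of_nonneg ht] at hbound
  have hWP : ∀ x ∈ Icc 0 T, ‖U x • g x‖ ≤ C * P x := fun x hx => by
    rcases hx.1.eq_or_lt with rfl | hx0
    · simp [hg0, hP_def]
    calc ‖U x • g x‖ ≤ |U x| * (P x * x) := by
          rw [norm_smul, Real.norm_eq_abs]
          gcongr
          exact hgP x hx.1
      _ = |x * U x| * P x := by rw [abs_mul, abs_of_pos hx0]; ring
      _ ≤ C * P x := mul_le_mul_of_nonneg_right (hU x ⟨hx0, hx.2⟩) (hP_nonneg x hx.1)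
  have hP_zero : ∀ t ∈ Icc 0 T, P t = 0 := by
    refine eq_zero_of_norm_le_mul_integral_norm (C := C) hP.continuous fun t ht => ?_
    rw [Real.norm_of_nonneg (hP_nonneg t ht.1), ← intervalIntegral.integral_const_mul]
    refine intervalIntegral.integral_mono_on ht.1 (intervalIntegrable_of_locallyIntegrable hW _ _)
      ((hP.continuous.norm.const_mul C).intervalIntegrable _ _) fun x hx => ?_
    rw [Real.norm_of_nonneg (hP_nonneg x hx.1)]
    exact hWP x ⟨hx.1, hx.2.trans ht.2⟩
  intro x hx
  simpa [hP_zero x hx] using hgP x hx.1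

end Uniqueness

lemma eq_zero_of_hasDerivAt_of_eqOn_Ici {g : ℝ → ℝ} {m a : ℝ} (hg : HasDerivAt g m a)
    (h : ∀ x ∈ Ici a, g x = 0) : m = 0 :=
  (uniqueDiffWithinAt_Ici a).eq_deriv _ hg.hasDerivWithinAt
    ((hasDerivWithinAt_const a (Ici a) (0 : ℝ)).congr h (h a self_mem_Ici))

lemma IsWeakSolution.integral_sq_le_integral_weighted {U g g' ρ : ℝ → ℝ}
    (hsol : IsWeakSolution U g) (hg : IsPrimitive g g') (hρ : Continuous ρ) (hρ1 : ∀ x, 1 ≤ ρ x)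
    {a b : ℝ} (hab : a ≤ b) :
    ∫ x in a..b, g x ^ 2 ≤ ∫ x in a..b, ρ x * (g x ^ 2 + g' x ^ 2) := by
  have hg_cont := hg.continuous
  obtain ⟨G, hgG, hGW⟩ := hsol.exists_isPrimitive hg_cont
  have hG_cont := hGW.continuous
  -- If `g'` were not square integrable, the right-hand side would be the junk value `0`; the
  -- equation rules this out, because it makes `g'` agree almost everywhere with the continuous `G`.
  have hcongr : ∫ x in a..b, ρ x * (g x ^ 2 + g' x ^ 2)
      = ∫ x in a..b, ρ x * (g x ^ 2 + G x ^ 2) := by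
    refine intervalIntegral.integral_congr_ae ?_
    filter_upwards [hg.ae_eq hgG] with x hx _
    rw [hx]
  rw [hcongr]
  refine intervalIntegral.integral_mono hab (Continuous.intervalIntegrable (by fun_prop) _ _)
    (Continuous.intervalIntegrable (by fun_prop) _ _) fun x => ?_
  calc g x ^ 2 ≤ g x ^ 2 + G x ^ 2 := le_add_of_nonneg_right (sq_nonneg _)
    _ ≤ ρ x * (g x ^ 2 + G x ^ 2) := le_mul_of_one_le_left (by positivity) (hρ1 x)

/-- The potential that the limiting equation carries near the vortex centre `v = 0`; division by
zero gives it the value `0` there. -/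
noncomputable def vortexPotential (v : ℝ) : ℝ := 8 * exp (2 * v) / (exp (2 * v) - 1)

lemma vortexPotential_nonneg {v : ℝ} (hv : 0 < v) : 0 ≤ vortexPotential v := by
  have hexp : 1 < exp (2 * v) := one_lt_exp_iff.mpr (by linarith)
  exact div_nonneg (by positivity) (by linarith)

lemma abs_mul_vortexPotential_le {v : ℝ} (hv : v < 0) : |v * vortexPotential v| ≤ 4 := by
  have hexp : exp (2 * v) < 1 := exp_lt_one_iff.mpr (by linarith)
  have hexp_mul : exp (2 * v) * (1 - 2 * v) ≤ 1 := by
    calc exp (2 * v) * (1 - 2 * v) ≤ exp (2 * v) * exp (-(2 * v)) := by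
          gcongr
          linarith [add_one_le_exp (-(2 * v))]
      _ = 1 := by rw [← exp_add, add_neg_cancel, exp_zero]
  have heq : v * vortexPotential v = 8 * exp (2 * v) * (-v) / (1 - exp (2 * v)) := by
    rw [vortexPotential, ← neg_sub (exp (2 * v)) 1, div_neg]
    ring
  rw [heq, abs_of_nonneg (div_nonneg (mul_nonneg (by positivity) (by linarith)) (by linarith)),
    div_le_iff₀ (by linarith)]
  linarith

lemma abs_mul_const_add_vortexPotential_le {c v T : ℝ} (hv : v ∈ Ico (-T) 0) :
    |v * (c + vortexPotential v)| ≤ T * |c| + 4 := by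
  calc |v * (c + vortexPotential v)| ≤ |v| * |c| + |v * vortexPotential v| := by
        rw [mul_add, ← abs_mul]
        exact abs_add_le _ _
    _ ≤ T * |c| + 4 := by
        gcongr
        · exact abs_le.mpr ⟨hv.1, by linarith [hv.1, hv.2]⟩
        · exact abs_mul_vortexPotential_le hv.2

theorem stmt16_general {U g : ℝ → ℝ} {M : ℝ} (hg : Continuous g) (hsol : IsWeakSolution U g)
    (hg0 : g 0 = 0) (hU_nonneg : ∀ v, 0 < v → 0 ≤ U v)
    (hU_bound : ∀ T, ∃ C, ∀ v ∈ Ico (-T) 0, |v * U v| ≤ C)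
    (hM : ∀ j : ℕ, ∫ v in (j : ℝ)..(j + 2), g v ^ 2 ≤ M) : ∀ v, g v = 0 := by
  obtain ⟨G, hgG, hGW⟩ := hsol.exists_isPrimitive hg
  have hconv : ConvexOn ℝ (Ici 0) fun v => g v ^ 2 := hgG.convexOn_sq hGW fun v hv => by
    rw [mul_left_comm]
    exact mul_nonneg (hU_nonneg v hv) (mul_self_nonneg (g v))
  have hright : ∀ v ∈ Ici 0, g v = 0 := fun v hv => by
    have hle := nonpos_of_convexOn_of_integral_le hconv (by simp [hg0]) hM hv
    exact pow_eq_zero_iff two_ne_zero |>.mp (hle.antisymm (sq_nonneg _))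
  have hG0 : G 0 = 0 :=
    eq_zero_of_hasDerivAt_of_eqOn_Ici (hgG.hasDerivAt hGW.continuous 0) hright
  intro v
  rcases le_total 0 v with hv | hv
  · exact hright v hv
  obtain ⟨C, hC⟩ := hU_bound (-v)
  have hG_neg : IsPrimitive (fun x => -G (-x)) fun x => U (-x) • g (-x) := by
    simpa only [neg_neg, smul_eq_mul] using hGW.comp_neg.neg
  have hbound : ∀ x ∈ Ioc 0 (-v), |x * U (-x)| ≤ C := fun x hx => by
    simpa only [neg_mul, abs_neg, neg_neg] using hC (-x) ⟨neg_le_neg hx.2, neg_neg_of_pos hx.1⟩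
  have hg_neg : g (- -v) = 0 := eq_zero_of_abs_mul_potential_le hgG.comp_neg hG_neg
    (by rw [neg_zero, hg0]) (by rw [neg_zero, hG0, neg_zero]) hbound (-v)
    ⟨neg_nonneg.mpr hv, le_rfl⟩
  rwa [neg_neg] at hg_neg

/-- Rigidity in the limiting absorption principle for `w ≤ −10`: a function `g` with
weak derivative `g'`, exponentially weighted `H¹`-type bounds on unit intervals, solving
`(k² − ∂_v²)g + (8e^{2v}/(e^{2v}−1))g = 0` distributionally with `g(0) = 0`, vanishes
identically. -/
theorem stmt16 (w β : ℝ) (hw : w ≤ -10) (hβ : β ≠ 0) (k : ℤ) (hk : 1 ≤ k)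
    (g g' : ℝ → ℝ)
    (hloc : MeasureTheory.LocallyIntegrable g' MeasureTheory.volume)
    (hFTC : ∀ a c : ℝ, g c - g a = ∫ v in a..c, g' v)
    (hbounds : ∃ M : ℝ, ∀ j : ℤ,
      (∫ v in (j:ℝ)..(j+2), Real.exp (2*|v|) * ((g v)^2 + (g' v)^2)) ≤ M)
    (heq : ∀ φ : ℝ → ℝ, ContDiff ℝ (⊤ : ℕ∞) φ → HasCompactSupport φ →
      MeasureTheory.Integrable
        (fun v => (8 * Real.exp (2*v) / (Real.exp (2*v) - 1)) * g v * φ v) ∧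
      ∫ v : ℝ, (g v * ((k:ℝ)^2 * φ v - deriv (deriv φ) v)
        + (8 * Real.exp (2*v) / (Real.exp (2*v) - 1)) * g v * φ v) = 0)
    (hg0 : g 0 = 0) :
    ∀ v, g v = 0 := by
  have hprim : IsPrimitive g g' := ⟨hloc, hFTC⟩
  have hsol := isWeakSolution_const_add (V := vortexPotential) hprim.continuous heq
  obtain ⟨M, hM⟩ := hbounds
  exact stmt16_general hprim.continuous hsol hg0
    (fun v hv => add_nonneg (sq_nonneg _) (vortexPotential_nonneg hv))
    (fun T => ⟨_, fun v hv => abs_mul_const_add_vortexPotential_le hv⟩)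
    fun j => (hsol.integral_sq_le_integral_weighted hprim (by fun_prop)
      (fun v => one_le_exp (by positivity)) (by linarith)).trans (hM j)
end
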